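/- One has sup_{0<θ<π} Im(e^{−iθ}·(−log(1−e^{iθ}))) = π/2, where log denotes the principal branch; equivalently, the function v(θ) = ((π−θ)/2)·cos θ + sin θ·log(2 sin(θ/2)) satisfies v(θ) ≤ π/2 for all 0 < θ < π and v(θ) → π/2 as θ → 0⁺. -/

import Mathlib

/-- The unit disk `{z : ℂ | |z| < 1}`. -/
noncomputable def unitDisk : Set ℂ := Metric.ball 0 1

/-- The extremal convex function of order `α`:
`k_α(z) = ((1-z)^(2α-1) - 1)/(1-2α)` (so that `k_α(0)=0`, `k_α'(0)=1`),
with `k_{1/2}(z) = -log(1-z)` (principal branches). -/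
noncomputable def kfun (α : ℝ) (z : ℂ) : ℂ :=
  if α = 1 / 2 then -Complex.log (1 - z)
  else ((1 - z) ^ ((2 * α - 1 : ℝ) : ℂ) - 1) / ((1 - 2 * α : ℝ) : ℂ)

/-- `h_α(z) = k_α(z)/z` for `z ≠ 0`, `h_α(0) = 1`. -/
noncomputable def hfun (α : ℝ) (z : ℂ) : ℂ :=
  if z = 0 then 1 else kfun α z / z

/-- `f ∈ K(α)`: `f` is analytic on the unit disk, normalized by `f(0)=0`, `f'(0)=1`,
with nonvanishing derivative and `Re(1 + z f''(z)/f'(z)) > α` on the disk. -/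
def IsConvexOfOrder (α : ℝ) (f : ℂ → ℂ) : Prop :=
  DifferentiableOn ℂ f unitDisk ∧ f 0 = 0 ∧ deriv f 0 = 1 ∧
    ∀ z ∈ unitDisk, deriv f z ≠ 0 ∧
      α < (1 + z * deriv (deriv f) z / deriv f z).re

theorem sin_eq_two_mul_sin_half_mul_cos_half (θ : ℝ) :
    Real.sin θ = 2 * Real.sin (θ / 2) * Real.cos (θ / 2) := by
  rw [← Real.sin_two_mul]; ring_nf

theorem cos_eq_one_sub_two_mul_sin_half_sq (θ : ℝ) :
    Real.cos θ = 1 - 2 * Real.sin (θ / 2) ^ 2 := by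
  have h := Real.cos_two_mul' (θ / 2)
  rw [show 2 * (θ / 2) = θ by ring] at h
  linarith [Real.sin_sq_add_cos_sq (θ / 2)]

/-- The boundary function `v(θ) = ((π-θ)/2) cos θ + sin θ log(2 sin(θ/2))` is at most `π/2`. -/
theorem im_khalf_boundary_le {θ : ℝ} (hθ : θ ∈ Set.Ioo (0 : ℝ) Real.pi) :
    (Real.pi - θ) / 2 * Real.cos θ + Real.sin θ * Real.log (2 * Real.sin (θ / 2))
      ≤ Real.pi / 2 := by
  obtain ⟨h0, hpi⟩ := hθ
  have hs : 0 < Real.sin (θ / 2) := Real.sin_pos_of_pos_of_lt_pi (by linarith) (by linarith)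
  have hs1 : Real.sin (θ / 2) ≤ 1 := Real.sin_le_one _
  have hc : 0 < Real.cos (θ / 2) := Real.cos_pos_of_mem_Ioo ⟨by linarith, by linarith⟩
  have hc1 : Real.cos (θ / 2) ≤ 1 := Real.cos_le_one _
  have hlt : Real.sin (θ / 2) < θ / 2 := Real.sin_lt (by linarith)
  have hlog : Real.log (2 * Real.sin (θ / 2)) ≤ 2 * Real.sin (θ / 2) - 1 :=
    Real.log_le_sub_one_of_pos (by linarith)
  have hsin0 : 0 < Real.sin θ := Real.sin_pos_of_pos_of_lt_pi h0 hpi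
  have hmul := mul_le_mul_of_nonneg_left hlog hsin0.le
  have hpi3 := Real.pi_gt_three
  rcases le_total 0 (Real.cos θ) with hcθ | hcθ
  · have hθcos := mul_le_mul_of_nonneg_right hlt.le hcθ
    set s := Real.sin (θ / 2)
    set c := Real.cos (θ / 2)
    have key : 2 * c * (2 * s - 1) ≤ 3 * s + (1 - 2 * s ^ 2) := by
      rcases le_total 0 (2 * s - 1) with h | h
      · nlinarith [mul_le_mul_of_nonneg_right hc1 h]
      · nlinarith [mul_nonneg hc.le (neg_nonneg.2 h)]
    have hkey := mul_le_mul_of_nonneg_left key hs.le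
    have hpis := mul_le_mul_of_nonneg_right hpi3.le (sq_nonneg s)
    rw [sin_eq_two_mul_sin_half_mul_cos_half θ] at hmul ⊢
    rw [cos_eq_one_sub_two_mul_sin_half_sq θ] at hθcos ⊢
    linarith
  · have hfst : (Real.pi - θ) / 2 * Real.cos θ ≤ 0 :=
      mul_nonpos_of_nonneg_of_nonpos (by linarith) hcθ
    have hle := Real.sin_le_one θ
    nlinarith

/-- The boundary function `v` tends to `π/2` at `0⁺`. -/
theorem tendsto_im_khalf_boundary :
    Filter.Tendsto
      (fun θ : ℝ => (Real.pi - θ) / 2 * Real.cos θ + Real.sin θ * Real.log (2 * Real.sin (θ / 2)))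
      (nhdsWithin 0 (Set.Ioi 0)) (nhds (Real.pi / 2)) := by
  have heq : (fun θ : ℝ =>
      (Real.pi - θ) / 2 * Real.cos θ + Real.sin θ * Real.log (2 * Real.sin (θ / 2))) =
      fun θ : ℝ => (Real.pi - θ) / 2 * Real.cos θ +
        Real.cos (θ / 2) * (2 * Real.sin (θ / 2) * Real.log (2 * Real.sin (θ / 2))) := by
    funext θ
    rw [sin_eq_two_mul_sin_half_mul_cos_half θ]; ring
  rw [heq]
  have hxlog : Continuous fun θ : ℝ =>
      2 * Real.sin (θ / 2) * Real.log (2 * Real.sin (θ / 2)) :=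
    Real.continuous_mul_log.comp (f := fun θ : ℝ => 2 * Real.sin (θ / 2)) (by fun_prop)
  have hcont : Continuous fun θ : ℝ => (Real.pi - θ) / 2 * Real.cos θ +
      Real.cos (θ / 2) * (2 * Real.sin (θ / 2) * Real.log (2 * Real.sin (θ / 2))) := by
    fun_prop
  have h := hcont.tendsto 0
  simp only [sub_zero, Real.cos_zero, mul_one, zero_div, Real.sin_zero, mul_zero, zero_mul,
    add_zero] at h
  exact h.mono_left nhdsWithin_le_nhds

/-- On `(0, π)` one has `log(1 - e^{iθ}) = log(2 sin(θ/2)) + i(θ-π)/2`. -/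
theorem log_one_sub_exp_mul_I {θ : ℝ} (hθ : θ ∈ Set.Ioo (0 : ℝ) Real.pi) :
    Complex.log (1 - Complex.exp ((θ : ℂ) * Complex.I)) =
      (Real.log (2 * Real.sin (θ / 2)) : ℝ) + (((θ - Real.pi) / 2 : ℝ) : ℂ) * Complex.I := by
  obtain ⟨h0, hpi⟩ := hθ
  have hs : 0 < Real.sin (θ / 2) := Real.sin_pos_of_pos_of_lt_pi (by linarith) (by linarith)
  have hexp : 1 - Complex.exp ((θ : ℂ) * Complex.I) =
      Complex.exp ((Real.log (2 * Real.sin (θ / 2)) : ℝ) +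
        (((θ - Real.pi) / 2 : ℝ) : ℂ) * Complex.I) := by
    have harg : (θ - Real.pi) / 2 = θ / 2 - Real.pi / 2 := by ring
    rw [Complex.exp_add, ← Complex.ofReal_exp, Real.exp_log (by linarith), Complex.exp_mul_I,
      Complex.exp_mul_I, ← Complex.ofReal_cos, ← Complex.ofReal_sin, ← Complex.ofReal_cos,
      ← Complex.ofReal_sin, harg, Real.cos_sub_pi_div_two, Real.sin_sub_pi_div_two,
      sin_eq_two_mul_sin_half_mul_cos_half θ, cos_eq_one_sub_two_mul_sin_half_sq θ]
    push_cast
    ring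
  rw [hexp, Complex.log_exp] <;> simp <;> linarith

/-- On `(0, π)` the imaginary part of `e^{-iθ} k_{1/2}(e^{iθ})` is the boundary function `v`. -/
theorem im_exp_mul_neg_log_one_sub_exp {θ : ℝ} (hθ : θ ∈ Set.Ioo (0 : ℝ) Real.pi) :
    (Complex.exp (-(θ : ℂ) * Complex.I) *
      (-Complex.log (1 - Complex.exp ((θ : ℂ) * Complex.I)))).im =
    (Real.pi - θ) / 2 * Real.cos θ + Real.sin θ * Real.log (2 * Real.sin (θ / 2)) := by
  rw [log_one_sub_exp_mul_I hθ, ← Complex.ofReal_neg, Complex.exp_mul_I, ← Complex.ofReal_cos,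
    ← Complex.ofReal_sin, Real.cos_neg, Real.sin_neg]
  simp only [Complex.mul_im, Complex.add_re, Complex.add_im, Complex.neg_re, Complex.neg_im,
    Complex.ofReal_re, Complex.ofReal_im, Complex.mul_re, Complex.I_re, Complex.I_im]
  ring

/-- `sup_{0<θ<π} Im(e^{-iθ}(-log(1-e^{iθ}))) = π/2`; equivalently the function
`v(θ) = ((π-θ)/2)cos θ + sin θ log(2 sin(θ/2))` is `≤ π/2` on `(0,π)` and tends to `π/2`
as `θ → 0⁺`. -/
theorem sup_im_khalf_boundary :
    sSup {y : ℝ | ∃ θ ∈ Set.Ioo (0 : ℝ) Real.pi,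
        y = (Complex.exp (-(θ : ℂ) * Complex.I) *
          (-Complex.log (1 - Complex.exp ((θ : ℂ) * Complex.I)))).im} = Real.pi / 2 ∧
    (∀ θ ∈ Set.Ioo (0 : ℝ) Real.pi,
      (Real.pi - θ) / 2 * Real.cos θ + Real.sin θ * Real.log (2 * Real.sin (θ / 2))
        ≤ Real.pi / 2) ∧
    Filter.Tendsto
      (fun θ : ℝ => (Real.pi - θ) / 2 * Real.cos θ + Real.sin θ * Real.log (2 * Real.sin (θ / 2)))
      (nhdsWithin 0 (Set.Ioi 0)) (nhds (Real.pi / 2)) := by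
  refine ⟨IsLUB.csSup_eq ⟨?_, fun b hb => ?_⟩ ?_, fun θ hθ => im_khalf_boundary_le hθ,
    tendsto_im_khalf_boundary⟩
  · rintro y ⟨θ, hθ, rfl⟩
    rw [im_exp_mul_neg_log_one_sub_exp hθ]
    exact im_khalf_boundary_le hθ
  · refine le_of_tendsto tendsto_im_khalf_boundary ?_
    filter_upwards [Ioo_mem_nhdsGT Real.pi_pos] with θ hθ
    exact hb ⟨θ, hθ, (im_exp_mul_neg_log_one_sub_exp hθ).symm⟩
  · exact ⟨_, Real.pi / 2, ⟨by linarith [Real.pi_pos], by linarith [Real.pi_pos]⟩, rfl⟩
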